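/- Let M ≥ 2 be an integer and let u* be a minimizer of ψ_M over U_M. Then ψ_M(u*) = u*_1 (the branch corresponding to α = ∞ is active at index 1), and there exists a nonincreasing sequence γ_2 ≥ γ_3 ≥ ⋯ ≥ γ_M with each γ_i ∈ 𝒮 such that η_i(u*, γ_i) − h_M(γ_i) = ψ_M(u*) for every 2 ≤ i ≤ M. -/

import Mathlib

noncomputable def gammaMin (d : ℕ) (β : ℝ) : ℝ := β / (2 * β + d)

noncomputable def gammaMax (d : ℕ) (β : ℝ) : ℝ := (β + d) / (2 * β + d)

noncomputable def Sset (d : ℕ) (β : ℝ) : Set ℝ := Set.Icc (gammaMin d β) (gammaMax d β)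

noncomputable def hFun (M : ℕ) (γ : ℝ) : ℝ := (1 - γ) / (1 - γ ^ M)

/-- η_1(u,γ) = u_1, η_i(u,γ) = u_i − γ·u_{i−1} for 2 ≤ i ≤ M−1, η_M(u,γ) = 1 − γ·u_{M−1}. -/
noncomputable def etaFun (M : ℕ) (u : ℕ → ℝ) (γ : ℝ) (i : ℕ) : ℝ :=
  if i = 1 then u 1 else if i = M then 1 - γ * u (M - 1) else u i - γ * u (i - 1)

/-- Ψ_M(u,γ) = max_{1≤i≤M} η_i(u,γ) − h_M(γ). -/
noncomputable def PsiFun (M : ℕ) (u : ℕ → ℝ) (γ : ℝ) : ℝ :=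
  (⨆ i : Set.Icc 1 M, etaFun M u γ i.1) - hFun M γ

/-- ψ_M(u) = max( u_1, sup_{γ∈𝒮} Ψ_M(u,γ) ). -/
noncomputable def psiFun (d : ℕ) (β : ℝ) (M : ℕ) (u : ℕ → ℝ) : ℝ :=
  max (u 1) (⨆ γ : Sset d β, PsiFun M u γ.1)

/-- U_M = { u : 0 ≤ u_1 ≤ u_2 ≤ ⋯ ≤ u_{M−1} ≤ 1 } (only coordinates 1,…,M−1 matter). -/
def UM (M : ℕ) : Set (ℕ → ℝ) :=
  {u | 0 ≤ u 1 ∧ u (M - 1) ≤ 1 ∧ ∀ i, 1 ≤ i → i + 1 ≤ M - 1 → u i ≤ u (i + 1)}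

/-- ψ*_M = inf_{u ∈ U_M} ψ_M(u). -/
noncomputable def psiStar (d : ℕ) (β : ℝ) (M : ℕ) : ℝ :=
  sInf (psiFun d β M '' UM M)

/-!
Put `u_M = 1`, and let `g x = min_{γ ∈ 𝒮} (γ x + h_M γ)`. Exchanging the maximum over `i` with the
supremum over `γ` shows that `ψ_M u ≤ c` means `u_1 ≤ c` and `u_i ≤ c + g (u_{i-1})` for
`2 ≤ i ≤ M`. As `g` is increasing, such a `u` lies below the sequence in which all of these
inequalities are equalities. For a minimizer and `c = ψ_M u` that sequence ends at exactly `1`: if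
it ended above `1`, continuity of `g` would let a smaller `c > 0` reach `1` as well. Strict
monotonicity of `g` then propagates the equality at the last index down to the first one. The
required `γ_i` are minimizers in `g (u_{i-1})`, and these are nonincreasing in `u_{i-1}`.
-/

open Set Filter Topology

/-- `g` is the lower envelope of the affine functions `x ↦ γ x + h γ`, `γ ∈ K`. Attainment of the
infimum is part of the notion, so that `γ` can be chosen optimally at every point. -/
def IsLowerEnvelope (K : Set ℝ) (h g : ℝ → ℝ) : Prop :=
  ∀ x, IsLeast ((fun γ => γ * x + h γ) '' K) (g x)

theorem exists_isLowerEnvelope {K : Set ℝ} {h : ℝ → ℝ} (hK : IsCompact K) (hne : K.Nonempty)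
    (hh : ContinuousOn h K) : ∃ g, IsLowerEnvelope K h g :=
  ⟨_, fun _ => (hK.image_of_continuousOn (by fun_prop)).isLeast_sInf (hne.image _)⟩

namespace IsLowerEnvelope

variable {K : Set ℝ} {h g : ℝ → ℝ} {x c γ : ℝ}

theorem apply_le (hg : IsLowerEnvelope K h g) (hγ : γ ∈ K) : g x ≤ γ * x + h γ :=
  (hg x).2 (mem_image_of_mem _ hγ)

theorem exists_eq (hg : IsLowerEnvelope K h g) (x : ℝ) : ∃ γ ∈ K, γ * x + h γ = g x :=
  (hg x).1

theorem le_apply_iff (hg : IsLowerEnvelope K h g) : c ≤ g x ↔ ∀ γ ∈ K, c ≤ γ * x + h γ := by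
  rw [le_isGLB_iff (hg x).isGLB, mem_lowerBounds, forall_mem_image]

theorem strictMono (hg : IsLowerEnvelope K h g) (hK : ∀ γ ∈ K, 0 < γ) : StrictMono g := by
  intro x y hxy
  obtain ⟨γ, hγ, hy⟩ := hg.exists_eq y
  calc g x ≤ γ * x + h γ := hg.apply_le hγ
    _ < γ * y + h γ := by gcongr; exact hK γ hγ
    _ = g y := hy

theorem lipschitzWith {C : NNReal} (hg : IsLowerEnvelope K h g) (hK : ∀ γ ∈ K, |γ| ≤ C) :
    LipschitzWith C g := by
  refine LipschitzWith.of_le_add_mul C fun x y => ?_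
  obtain ⟨γ, hγ, hy⟩ := hg.exists_eq y
  calc g x ≤ γ * x + h γ := hg.apply_le hγ
    _ = g y + γ * (x - y) := by rw [← hy]; ring
    _ ≤ g y + |γ| * |x - y| := by rw [← abs_mul]; gcongr; exact le_abs_self _
    _ ≤ g y + C * dist x y := by rw [Real.dist_eq]; gcongr; exact hK γ hγ

theorem exists_antitone_argmin (hg : IsLowerEnvelope K h g) :
    ∃ G : ℝ → ℝ, Antitone G ∧ ∀ x, G x ∈ K ∧ G x * x + h (G x) = g x := by
  choose G hGK hG using hg.exists_eq
  refine ⟨G, fun x y hxy => ?_, fun x => ⟨hGK x, hG x⟩⟩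
  rcases hxy.eq_or_lt with rfl | hlt
  · rfl
  · have hx : G x * x + h (G x) ≤ G y * x + h (G y) := hG x ▸ hg.apply_le (hGK y)
    have hy : G y * y + h (G y) ≤ G x * y + h (G x) := hG y ▸ hg.apply_le (hGK x)
    have hmul : G y * (y - x) ≤ G x * (y - x) := by linarith
    exact le_of_mul_le_mul_right hmul (sub_pos.2 hlt)

end IsLowerEnvelope

/-- The system of inequalities `x 0 ≤ c`, `x (n + 1) ≤ c + g (x n)`, up to index `N`, which
expresses `ψ_M ≤ c`. -/
def IsSubsolution (g : ℝ → ℝ) (c : ℝ) (N : ℕ) (x : ℕ → ℝ) : Prop :=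
  x 0 ≤ c ∧ ∀ n < N, x (n + 1) ≤ c + g (x n)

/-- The sequence with equality everywhere in `IsSubsolution`; it is the largest subsolution when `g`
is monotone. -/
def extremalSeq (g : ℝ → ℝ) (c : ℝ) (n : ℕ) : ℝ := (fun x => c + g x)^[n] c

section Subsolution

variable {g : ℝ → ℝ} {c : ℝ} {N : ℕ} {x : ℕ → ℝ}

theorem extremalSeq_zero (g : ℝ → ℝ) (c : ℝ) : extremalSeq g c 0 = c := rfl

theorem extremalSeq_succ (g : ℝ → ℝ) (c : ℝ) (n : ℕ) :
    extremalSeq g c (n + 1) = c + g (extremalSeq g c n) :=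
  Function.iterate_succ_apply' _ _ _

theorem continuous_extremalSeq (hg : Continuous g) (n : ℕ) :
    Continuous fun c => extremalSeq g c n := by
  induction n with
  | zero => exact continuous_id
  | succ n ih =>
    simp only [extremalSeq_succ]
    fun_prop

theorem monotone_extremalSeq (hg : Monotone g) (hc : 0 ≤ g c) : Monotone (extremalSeq g c) :=
  (hg.const_add c).monotone_iterate_of_le_map (le_add_of_nonneg_right hc)

theorem exists_isSubsolution (g : ℝ → ℝ) (N : ℕ) (x : ℕ → ℝ) : ∃ c, IsSubsolution g c N x := by
  obtain ⟨C, hC⟩ := ((finite_Iio N).image fun n => x (n + 1) - g (x n)).bddAbove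
  refine ⟨max (x 0) C, le_max_left _ _, fun n hn => sub_le_iff_le_add.1 ?_⟩
  exact (hC (mem_image_of_mem _ hn)).trans (le_max_right _ _)

theorem IsSubsolution.le_extremalSeq (hx : IsSubsolution g c N x) (hg : Monotone g) :
    x N ≤ extremalSeq g c N :=
  (hg.const_add c).seq_le_seq N hx.1 hx.2 fun n _ => (extremalSeq_succ g c n).ge

theorem IsSubsolution.eq_extremalSeq (hx : IsSubsolution g c N x) (hg : StrictMono g)
    (hN : extremalSeq g c N ≤ x N) {n : ℕ} (hn : n ≤ N) : x n = extremalSeq g c n := by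
  have hle : extremalSeq g c n ≤ x n := by
    induction hn using Nat.decreasingInduction with
    | self => exact hN
    | of_succ k hk ih =>
      have hstep := ih.trans (hx.2 k hk)
      rw [extremalSeq_succ] at hstep
      exact hg.le_iff_le.1 (le_of_add_le_add_left hstep)
  have hxn : IsSubsolution g c n x := ⟨hx.1, fun k hk => hx.2 k (hk.trans_le hn)⟩
  exact (hxn.le_extremalSeq hg.monotone).antisymm hle

theorem isSubsolution_min_extremalSeq {b : ℝ} (hb : b ≤ c + g b) (N : ℕ) :
    IsSubsolution g c N fun n => min (extremalSeq g c n) b := by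
  refine ⟨min_le_left _ _, fun n _ => ?_⟩
  rcases min_cases (extremalSeq g c n) b with ⟨hmin, -⟩ | ⟨hmin, -⟩ <;> simp only [hmin]
  · exact (min_le_left _ _).trans (extremalSeq_succ g c n).le
  · exact (min_le_right _ _).trans hb

theorem exists_mem_Ioo_lt_extremalSeq {a b : ℝ} (hg : Continuous g) (hac : a < c)
    (hb : b < extremalSeq g c N) : ∃ w ∈ Ioo a c, b < extremalSeq g w N := by
  have hnear : ∀ᶠ w in 𝓝[<] c, b < extremalSeq g w N :=
    nhdsWithin_le_nhds ((continuous_extremalSeq hg N).continuousAt.eventually (lt_mem_nhds hb))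
  obtain ⟨w, hbw, hw⟩ := (hnear.and (Ioo_mem_nhdsLT hac)).exists
  exact ⟨w, hw, hbw⟩

end Subsolution

section GeometricBound

variable {M : ℕ} {γ : ℝ}

theorem continuousOn_hFun (hM : M ≠ 0) : ContinuousOn (hFun M) (Ico 0 1) :=
  ContinuousOn.div (by fun_prop) (by fun_prop) fun _ hγ =>
    (sub_pos.2 (pow_lt_one₀ hγ.1 hγ.2 hM)).ne'

theorem one_sub_le_hFun (hM : M ≠ 0) (hγ : γ ∈ Ico 0 1) : 1 - γ ≤ hFun M γ :=
  le_div_self (sub_nonneg.2 hγ.2.le) (sub_pos.2 (pow_lt_one₀ hγ.1 hγ.2 hM))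
    (sub_le_self _ (pow_nonneg hγ.1 M))

theorem hFun_pos (hM : M ≠ 0) (hγ : γ ∈ Ico 0 1) : 0 < hFun M γ :=
  (sub_pos.2 hγ.2).trans_le (one_sub_le_hFun hM hγ)

theorem hFun_mul_geom_sum (hM : M ≠ 0) (hγ : γ ∈ Ico 0 1) :
    hFun M γ * ∑ i ∈ Finset.range M, γ ^ i = 1 := by
  rw [hFun, div_mul_eq_mul_div, mul_neg_geom_sum]
  exact div_self (sub_pos.2 (pow_lt_one₀ hγ.1 hγ.2 hM)).ne'

theorem le_mul_geom_sum_of_le_mul_add {a b : ℝ} {N : ℕ} {x : ℕ → ℝ} (ha : 0 ≤ a) (h0 : x 0 ≤ 0)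
    (hx : ∀ n < N, x (n + 1) ≤ a * x n + b) : x N ≤ b * ∑ i ∈ Finset.range N, a ^ i := by
  have hmono : Monotone fun t => a * t + b := fun s t hst => by dsimp only; gcongr
  have hgeom (n : ℕ) : a * (b * ∑ i ∈ Finset.range n, a ^ i) + b =
      b * ∑ i ∈ Finset.range (n + 1), a ^ i := by
    rw [geom_sum_succ]
    ring
  exact hmono.seq_le_seq (y := fun n => b * ∑ i ∈ Finset.range n, a ^ i) N (by simpa using h0) hx
    fun n _ => (hgeom n).le

end GeometricBound

/-- The levels `u_1, …, u_{M-1}, u_M = 1`, indexed from `0`. -/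
def levels (M : ℕ) (u : ℕ → ℝ) (n : ℕ) : ℝ := if n + 1 = M then 1 else u (n + 1)

section Levels

variable {M : ℕ} {u : ℕ → ℝ}

theorem levels_zero (hM : 2 ≤ M) : levels M u 0 = u 1 := if_neg (by omega)

theorem levels_last (hM : M ≠ 0) : levels M u (M - 1) = 1 := if_pos (by omega)

theorem etaFun_one (M : ℕ) (u : ℕ → ℝ) (γ : ℝ) : etaFun M u γ 1 = u 1 := if_pos rfl

theorem etaFun_add_two {n : ℕ} (hn : n + 2 ≤ M) (γ : ℝ) :
    etaFun M u γ (n + 2) = levels M u (n + 1) - γ * levels M u n := by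
  have hlevel : levels M u n = u (n + 1) := if_neg (by omega)
  rw [hlevel, etaFun, if_neg (by omega), levels]
  split_ifs with hlast
  · subst hlast
    rfl
  · rfl

theorem monotoneOn_levels (hu : u ∈ UM M) : MonotoneOn (levels M u) (Iio M) := by
  refine monotoneOn_of_le_add_one ordConnected_Iio fun n _ _ hn => ?_
  rw [mem_Iio] at hn
  have hlevel : levels M u n = u (n + 1) := if_neg (by omega)
  rw [hlevel, levels]
  split_ifs with hlast
  · exact (show n + 1 = M - 1 by omega) ▸ hu.2.1
  · exact hu.2.2 (n + 1) (by omega) (by omega)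

theorem comp_pred_mem_UM {x : ℕ → ℝ} (hx : Monotone x) (h0 : 0 ≤ x 0) (h1 : ∀ n, x n ≤ 1) :
    (fun i => x (i - 1)) ∈ UM M :=
  ⟨h0, h1 _, fun _ _ _ => hx (by omega)⟩

theorem levels_comp_pred {x : ℕ → ℝ} (hx : x (M - 1) = 1) : levels M (fun i => x (i - 1)) = x := by
  ext n
  rw [levels]
  split_ifs with hlast
  · rw [← hx, ← hlast, Nat.add_sub_cancel]
  · rfl

end Levels

/-- The objective `ψ_M` with an arbitrary set `K` of exponents in place of `𝒮`. -/
noncomputable def psiOn (K : Set ℝ) (M : ℕ) (u : ℕ → ℝ) : ℝ :=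
  max (u 1) (⨆ γ : K, PsiFun M u γ)

section Objective

variable {K : Set ℝ} {M : ℕ} {u : ℕ → ℝ} {g : ℝ → ℝ} {c : ℝ}

theorem PsiFun_le_iff (hM : M ≠ 0) {γ : ℝ} :
    PsiFun M u γ ≤ c ↔ ∀ i, 1 ≤ i → i ≤ M → etaFun M u γ i ≤ c + hFun M γ := by
  have : Nonempty (Icc 1 M) := ⟨⟨1, le_rfl, Nat.one_le_iff_ne_zero.2 hM⟩⟩
  rw [PsiFun, sub_le_iff_le_add, ciSup_le_iff (finite_range _).bddAbove]
  simp only [Subtype.forall, mem_Icc, and_imp]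

theorem forall_PsiFun_le_iff (hg : IsLowerEnvelope K (hFun M) g) (hK : K ⊆ Ico 0 1) (hM : M ≠ 0)
    (hu : u 1 ≤ c) : (∀ γ ∈ K, PsiFun M u γ ≤ c) ↔
      ∀ n < M - 1, levels M u (n + 1) ≤ c + g (levels M u n) := by
  simp only [PsiFun_le_iff hM, ← sub_le_iff_le_add', hg.le_apply_iff]
  constructor
  · intro h n hn γ hγ
    have heta := h γ hγ (n + 2) (by omega) (by omega)
    rw [etaFun_add_two (by omega)] at heta
    linarith
  · intro h γ hγ i hi hiM
    rcases hi.eq_or_lt with rfl | hi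
    · rw [etaFun_one]
      linarith [hFun_pos hM (hK hγ)]
    · obtain ⟨n, rfl⟩ := Nat.exists_eq_add_of_le' hi
      rw [etaFun_add_two hiM]
      linarith [h n (by omega) γ hγ]

theorem psiOn_le_iff (hg : IsLowerEnvelope K (hFun M) g) (hK : K ⊆ Ico 0 1) (hM : 2 ≤ M) :
    psiOn K M u ≤ c ↔ IsSubsolution g c (M - 1) (levels M u) := by
  have hbdd : BddAbove (range fun γ : K => PsiFun M u γ) := by
    obtain ⟨C, hC0, hC⟩ := exists_isSubsolution g (M - 1) (levels M u)
    rw [levels_zero hM] at hC0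
    refine ⟨C, forall_mem_range.2 fun γ => ?_⟩
    exact (forall_PsiFun_le_iff hg hK (by omega) hC0).2 hC γ γ.2
  obtain ⟨a, ha, -⟩ := hg.exists_eq 0
  have : Nonempty K := ⟨⟨a, ha⟩⟩
  rw [psiOn, max_le_iff, ciSup_le_iff hbdd, Subtype.forall, IsSubsolution, levels_zero hM]
  exact and_congr_right fun hu => forall_PsiFun_le_iff hg hK (by omega) hu

-- `h_M γ = 1 / (1 + γ + ⋯ + γ ^ (M - 1))`, so at `c = 0` the `M - 1` available steps sum to less
-- than the value `1` that they have to reach.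
theorem psiOn_pos (hg : IsLowerEnvelope K (hFun M) g) (hK : K ⊆ Ioo 0 1) (hM : 2 ≤ M)
    (u : ℕ → ℝ) : 0 < psiOn K M u := by
  by_contra! hle
  obtain ⟨h0, hstep⟩ := (psiOn_le_iff hg (hK.trans Ioo_subset_Ico_self) hM).1 hle
  obtain ⟨a, ha, -⟩ := hg.exists_eq 0
  have haI := Ioo_subset_Ico_self (hK ha)
  have hlast : levels M u (M - 1) ≤ hFun M a * ∑ i ∈ Finset.range (M - 1), a ^ i :=
    le_mul_geom_sum_of_le_mul_add haI.1 h0 fun n hn =>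
      (hstep n hn).trans (by simpa only [zero_add] using hg.apply_le ha)
  have hsum := hFun_mul_geom_sum (by omega : M ≠ 0) haI
  rw [show M = M - 1 + 1 by omega, Finset.sum_range_succ, mul_add, Nat.sub_add_cancel (by omega)]
    at hsum
  rw [levels_last (by omega)] at hlast
  have hpos : 0 < hFun M a * a ^ (M - 1) :=
    mul_pos (hFun_pos (by omega) haI) (pow_pos (hK ha).1 _)
  linarith

theorem exists_mem_UM_psiOn_le (hg : IsLowerEnvelope K (hFun M) g) (hK : K ⊆ Ioo 0 1)
    (hM : 2 ≤ M) (hc : 0 ≤ c) (hlast : 1 ≤ extremalSeq g c (M - 1)) :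
    ∃ w ∈ UM M, psiOn K M w ≤ c := by
  have hK' : K ⊆ Ico 0 1 := hK.trans Ioo_subset_Ico_self
  have hmono : Monotone g := (hg.strictMono fun γ hγ => (hK hγ).1).monotone
  have hgc : 0 ≤ g c := hg.le_apply_iff.2 fun γ hγ =>
    add_nonneg (mul_nonneg (hK' hγ).1 hc) (hFun_pos (by omega) (hK' hγ)).le
  have hg1 : 1 ≤ g 1 := hg.le_apply_iff.2 fun γ hγ => by
    linarith [one_sub_le_hFun (by omega : M ≠ 0) (hK' hγ)]
  let x : ℕ → ℝ := fun n => min (extremalSeq g c n) 1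
  have hxmono : Monotone x := (monotone_extremalSeq hmono hgc).min monotone_const
  refine ⟨fun i => x (i - 1),
    comp_pred_mem_UM hxmono (le_min hc zero_le_one) fun _ => min_le_right _ _, ?_⟩
  rw [psiOn_le_iff hg hK' hM, levels_comp_pred (min_eq_right hlast)]
  exact isSubsolution_min_extremalSeq (hg1.trans (le_add_of_nonneg_left hc)) _

theorem levels_eq_extremalSeq_of_isMinOn (hg : IsLowerEnvelope K (hFun M) g) (hK : K ⊆ Ioo 0 1)
    (hM : 2 ≤ M) (hmin : IsMinOn (psiOn K M) (UM M) u) {n : ℕ} (hn : n < M) :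
    levels M u n = extremalSeq g (psiOn K M u) n := by
  have hsub : IsSubsolution g (psiOn K M u) (M - 1) (levels M u) :=
    (psiOn_le_iff hg (hK.trans Ioo_subset_Ico_self) hM).1 le_rfl
  refine hsub.eq_extremalSeq (hg.strictMono fun γ hγ => (hK hγ).1) ?_ (Nat.le_sub_one_of_lt hn)
  rw [levels_last (by omega)]
  by_contra! hlt
  have hcont : Continuous g := (hg.lipschitzWith (C := 1) fun γ hγ =>
    abs_le.2 ⟨by linarith [(hK hγ).1], (hK hγ).2.le⟩).continuous
  obtain ⟨c, hc, hlast⟩ := exists_mem_Ioo_lt_extremalSeq hcont (psiOn_pos hg hK hM u) hlt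
  obtain ⟨w, hw, hwc⟩ := exists_mem_UM_psiOn_le hg hK hM hc.1.le hlast.le
  exact ((isMinOn_iff.1 hmin w hw).trans hwc).not_gt hc.2

end Objective

theorem stmt2_general {K : Set ℝ} (hK : IsCompact K) (hne : K.Nonempty) (hK01 : K ⊆ Ioo 0 1)
    {M : ℕ} (hM : 2 ≤ M) {u : ℕ → ℝ} (hu : u ∈ UM M) (hmin : IsMinOn (psiOn K M) (UM M) u) :
    psiOn K M u = u 1 ∧
    ∃ γ : ℕ → ℝ,
      (∀ i, 2 ≤ i → i ≤ M → γ i ∈ K) ∧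
      (∀ i j, 2 ≤ i → i ≤ j → j ≤ M → γ j ≤ γ i) ∧
      (∀ i, 2 ≤ i → i ≤ M → etaFun M u (γ i) i - hFun M (γ i) = psiOn K M u) := by
  obtain ⟨g, hg⟩ := exists_isLowerEnvelope hK hne
    ((continuousOn_hFun (by omega : M ≠ 0)).mono (hK01.trans Ioo_subset_Ico_self))
  have hext {n : ℕ} (hn : n < M) := levels_eq_extremalSeq_of_isMinOn hg hK01 hM hmin hn
  obtain ⟨G, hanti, hG⟩ := hg.exists_antitone_argmin
  refine ⟨?_, fun i => G (levels M u (i - 2)), fun i _ _ => (hG _).1, fun i j hi hij hj => ?_,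
    fun i hi hiM => ?_⟩
  · rw [← levels_zero (u := u) hM, hext (by omega), extremalSeq_zero]
  · exact hanti (monotoneOn_levels hu (mem_Iio.2 (by omega)) (mem_Iio.2 (by omega)) (by omega))
  · obtain ⟨n, rfl⟩ := Nat.exists_eq_add_of_le' hi
    have hstep : levels M u (n + 1) = psiOn K M u + g (levels M u n) := by
      rw [hext (by omega), hext (by omega), extremalSeq_succ]
    beta_reduce
    rw [Nat.add_sub_cancel, etaFun_add_two hiM, hstep, ← (hG _).2]
    ring

section Exponents

variable {β : ℝ}

theorem Sset_nonempty (d : ℕ) (hβ : 0 < β) : (Sset d β).Nonempty := by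
  rw [Sset, nonempty_Icc, gammaMin, gammaMax]
  gcongr
  exact le_add_of_nonneg_right d.cast_nonneg

theorem Sset_subset_Ioo (d : ℕ) (hβ : 0 < β) : Sset d β ⊆ Ioo 0 1 := by
  have hmin : 0 < gammaMin d β := by unfold gammaMin; positivity
  have hmax : gammaMax d β < 1 := by
    rw [gammaMax, div_lt_one (by positivity)]
    linarith
  exact Icc_subset_Ioo hmin hmax

theorem isMinOn_psiFun_of_eq_psiStar {d M : ℕ} {u : ℕ → ℝ} (hmin : psiFun d β M u = psiStar d β M) :
    IsMinOn (psiFun d β M) (UM M) u := by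
  have hbdd : BddBelow (psiFun d β M '' UM M) :=
    ⟨0, forall_mem_image.2 fun _ hw => hw.1.trans (le_max_left _ _)⟩
  exact isMinOn_iff.2 fun w hw => hmin.le.trans (csInf_le hbdd (mem_image_of_mem _ hw))

end Exponents

theorem stmt2 (d : ℕ) (hd : 1 ≤ d) (β : ℝ) (hβ : 0 < β) (M : ℕ) (hM2 : 2 ≤ M)
    (u : ℕ → ℝ) (hu : u ∈ UM M) (hmin : psiFun d β M u = psiStar d β M) :
    psiFun d β M u = u 1 ∧
    ∃ γ : ℕ → ℝ,
      (∀ i, 2 ≤ i → i ≤ M → γ i ∈ Sset d β) ∧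
      (∀ i j, 2 ≤ i → i ≤ j → j ≤ M → γ j ≤ γ i) ∧
      (∀ i, 2 ≤ i → i ≤ M → etaFun M u (γ i) i - hFun M (γ i) = psiFun d β M u) :=
  stmt2_general isCompact_Icc (Sset_nonempty d hβ) (Sset_subset_Ioo d hβ) hM2 hu
    (isMinOn_psiFun_of_eq_psiStar hmin)
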